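/- arXiv:1507.05835 — 3 statements merged into one kernel-verified Lean document; each statement's English description precedes it below -/
import Mathlib

section
/- Let U ⊆ ℝ^d be an open set and let ρ : ℝ^d → ℝ be twice continuously differentiable on U with ‖∇ρ(x)‖ = 1 for every x ∈ U; set H(x) = ∇²ρ(x), P(x) = I − ∇ρ(x) ⊗ ∇ρ(x) and p(x) = x − ρ(x) ∇ρ(x). Let x ∈ U and let v : ℝ^d → ℝ be differentiable at p(x). Then the composition v ∘ p is differentiable at x with ∇(v ∘ p)(x) = (P(x) − ρ(x) H(x)) ∇v(p(x)), and moreover for every unit vector n_h ∈ ℝ^d, setting P_h = I − n_h ⊗ n_h and B(x) = P(x)(I − ρ(x) H(x)) P_h, one has P_h ∇(v ∘ p)(x) = B(x)^T (P(x) ∇v(p(x))). -/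
/-!
Differentiating `p(x) = x - ρ(x) ∇ρ(x)` gives `Dp(x) = P(x) - ρ(x) H(x)`. Both `P` and `H` are
self-adjoint (for `H`, by symmetry of second derivatives, `inner_hessian_symm`), so the chain rule
`∇(v ∘ p)(x) = Dp(x)ᵀ ∇v(p(x))` is the first formula. Differentiating `‖∇ρ‖² = 1` gives
`⟪∇ρ, H w⟫ = 0` for all `w` (`inner_gradient_hessian`), that is `P H = H = H P`. Together with
`P² = P` this yields `P - ρ H = (I - ρ H) P = ((I - ρ H) P) P`, and applying `P_h` gives the
second formula.
-/

open scoped RealInnerProductSpace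

/-- The rank-one map `a ⊗ b : v ↦ ⟨b, v⟩ a`. -/
noncomputable def outerProd {d : ℕ} (a b : EuclideanSpace ℝ (Fin d)) :
    EuclideanSpace ℝ (Fin d) →L[ℝ] EuclideanSpace ℝ (Fin d) :=
  (innerSL ℝ b).smulRight a

/-- The orthogonal projection `I - n ⊗ n` onto the orthogonal complement of `n`. -/
noncomputable def tangProj {d : ℕ} (n : EuclideanSpace ℝ (Fin d)) :
    EuclideanSpace ℝ (Fin d) →L[ℝ] EuclideanSpace ℝ (Fin d) :=
  ContinuousLinearMap.id ℝ _ - outerProd n n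

/-- The closest point projection `p(x) = x - ρ(x) ∇ρ(x)` associated with a signed
distance function `ρ`. -/
noncomputable def closestPoint {d : ℕ} (ρ : EuclideanSpace ℝ (Fin d) → ℝ)
    (x : EuclideanSpace ℝ (Fin d)) : EuclideanSpace ℝ (Fin d) :=
  x - ρ x • gradient ρ x

section Helpers

variable {d : ℕ}

lemma tangProj_apply (n w : EuclideanSpace ℝ (Fin d)) :
    tangProj n w = w - ⟪n, w⟫ • n := by
  simp [tangProj, outerProd]

lemma inner_tangProj_left (n a b : EuclideanSpace ℝ (Fin d)) :
    ⟪tangProj n a, b⟫ = ⟪a, tangProj n b⟫ := by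
  simp only [tangProj_apply, inner_sub_left, inner_sub_right, inner_smul_left, inner_smul_right,
    real_inner_comm n a]
  simp [mul_comm]

lemma tangProj_tangProj {n : EuclideanSpace ℝ (Fin d)} (hn : ‖n‖ = 1)
    (a : EuclideanSpace ℝ (Fin d)) : tangProj n (tangProj n a) = tangProj n a := by
  simp [tangProj_apply, inner_sub_right, inner_smul_right, hn]

lemma inner_gradient_eq_fderiv (f : EuclideanSpace ℝ (Fin d) → ℝ)
    (x w : EuclideanSpace ℝ (Fin d)) : ⟪gradient f x, w⟫ = fderiv ℝ f x w := by
  rw [← toDual_gradient, InnerProductSpace.toDual_apply_apply]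

lemma differentiableAt_gradient {ρ : EuclideanSpace ℝ (Fin d) → ℝ}
    {x : EuclideanSpace ℝ (Fin d)} (hρ : ContDiffAt ℝ 2 ρ x) :
    DifferentiableAt ℝ (gradient ρ) x := by
  have h : DifferentiableAt ℝ (fderiv ℝ ρ) x :=
    (hρ.fderiv_right (m := 1) (by norm_num)).differentiableAt (by norm_num)
  exact (InnerProductSpace.toDual ℝ (EuclideanSpace ℝ (Fin d))).symm.toContinuousLinearEquiv
    |>.differentiableAt.comp x h

lemma inner_hessian_eq {ρ : EuclideanSpace ℝ (Fin d) → ℝ}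
    {x : EuclideanSpace ℝ (Fin d)} (hρ : ContDiffAt ℝ 2 ρ x)
    (a b : EuclideanSpace ℝ (Fin d)) :
    ⟪fderiv ℝ (gradient ρ) x a, b⟫ = fderiv ℝ (fderiv ℝ ρ) x a b := by
  have h : DifferentiableAt ℝ (fderiv ℝ ρ) x :=
    (hρ.fderiv_right (m := 1) (by norm_num)).differentiableAt (by norm_num)
  have h1 := (differentiableAt_gradient hρ).hasFDerivAt.inner ℝ (hasFDerivAt_const b x)
  have h2 := h.hasFDerivAt.clm_apply (hasFDerivAt_const b x)
  simp only [inner_gradient_eq_fderiv] at h1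
  simpa using congrArg (fun L => L a) (h1.unique h2)

lemma inner_hessian_symm {ρ : EuclideanSpace ℝ (Fin d) → ℝ}
    {x : EuclideanSpace ℝ (Fin d)} (hρ : ContDiffAt ℝ 2 ρ x)
    (a b : EuclideanSpace ℝ (Fin d)) :
    ⟪fderiv ℝ (gradient ρ) x a, b⟫ = ⟪a, fderiv ℝ (gradient ρ) x b⟫ := by
  rw [real_inner_comm _ a, inner_hessian_eq hρ, inner_hessian_eq hρ]
  exact hρ.isSymmSndFDerivAt (by simp) a b

/-- Differentiated eikonal equation: the Hessian takes values orthogonal to the gradient. -/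
lemma inner_gradient_hessian {ρ : EuclideanSpace ℝ (Fin d) → ℝ}
    {x : EuclideanSpace ℝ (Fin d)} (hρ : ContDiffAt ℝ 2 ρ x)
    (heik : ∀ᶠ y in nhds x, ‖gradient ρ y‖ = 1) (w : EuclideanSpace ℝ (Fin d)) :
    ⟪gradient ρ x, fderiv ℝ (gradient ρ) x w⟫ = 0 := by
  have h1 := (differentiableAt_gradient hρ).hasFDerivAt.inner ℝ
    (differentiableAt_gradient hρ).hasFDerivAt
  have h2 : HasFDerivAt (fun y => ⟪gradient ρ y, gradient ρ y⟫)
      (0 : EuclideanSpace ℝ (Fin d) →L[ℝ] ℝ) x := by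
    refine (hasFDerivAt_const (1 : ℝ) x).congr_of_eventuallyEq ?_
    filter_upwards [heik] with y hy
    simp [hy]
  have h3 := congrArg (fun L => L w) (h1.unique h2)
  rw [inner_gradient_eq_fderiv]
  simpa [real_inner_comm (gradient ρ x)] using h3

lemma hasFDerivAt_closestPoint {ρ : EuclideanSpace ℝ (Fin d) → ℝ}
    {x : EuclideanSpace ℝ (Fin d)} (hρ : ContDiffAt ℝ 2 ρ x) :
    HasFDerivAt (closestPoint ρ)
      (tangProj (gradient ρ x) - ρ x • fderiv ℝ (gradient ρ) x) x := by
  have hd : DifferentiableAt ℝ ρ x := hρ.differentiableAt (by norm_num)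
  have h := (hasFDerivAt_id x).sub
    (hd.hasFDerivAt.smul (differentiableAt_gradient hρ).hasFDerivAt)
  refine h.congr_fderiv ?_
  ext1 w
  simp [tangProj_apply]
  abel

end Helpers

/-- Let `ρ` be `C²` on an open set `U` with `‖∇ρ‖ = 1` on `U`, `H = ∇²ρ`,
`P = I - ∇ρ ⊗ ∇ρ`, `p(x) = x - ρ(x)∇ρ(x)`.  If `v` is differentiable at `p(x)` then
`v ∘ p` is differentiable at `x` with `∇(v ∘ p)(x) = (P(x) - ρ(x)H(x)) ∇v(p(x))`, and
for every unit vector `n_h`, with `P_h = I - n_h ⊗ n_h` and `B = P(I - ρH)P_h`,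
one has `P_h ∇(v ∘ p)(x) = Bᵀ (P(x) ∇v(p(x)))`. -/
theorem gradient_of_extension {d : ℕ}
    (U : Set (EuclideanSpace ℝ (Fin d))) (hU : IsOpen U)
    (ρ : EuclideanSpace ℝ (Fin d) → ℝ) (hρ : ContDiffOn ℝ 2 ρ U)
    (heik : ∀ x ∈ U, ‖gradient ρ x‖ = 1)
    (x : EuclideanSpace ℝ (Fin d)) (hx : x ∈ U)
    (v : EuclideanSpace ℝ (Fin d) → ℝ)
    (hv : DifferentiableAt ℝ v (closestPoint ρ x)) :
    DifferentiableAt ℝ (v ∘ closestPoint ρ) x ∧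
    gradient (v ∘ closestPoint ρ) x =
      (tangProj (gradient ρ x) - ρ x • fderiv ℝ (gradient ρ) x)
        (gradient v (closestPoint ρ x)) ∧
    ∀ nh : EuclideanSpace ℝ (Fin d), ‖nh‖ = 1 →
      tangProj nh (gradient (v ∘ closestPoint ρ) x) =
        (ContinuousLinearMap.adjoint
          (tangProj (gradient ρ x) ∘L
            (ContinuousLinearMap.id ℝ _ - ρ x • fderiv ℝ (gradient ρ) x) ∘L
            tangProj nh))
          (tangProj (gradient ρ x) (gradient v (closestPoint ρ x))) := by
  have hρx : ContDiffAt ℝ 2 ρ x := hρ.contDiffAt (hU.mem_nhds hx)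
  have heik' : ∀ᶠ y in nhds x, ‖gradient ρ y‖ = 1 := by
    filter_upwards [hU.mem_nhds hx] with y hy using heik y hy
  have hcomp := hv.hasFDerivAt.comp x (hasFDerivAt_closestPoint hρx)
  have hgrad : gradient (v ∘ closestPoint ρ) x =
      (tangProj (gradient ρ x) - ρ x • fderiv ℝ (gradient ρ) x)
        (gradient v (closestPoint ρ x)) := by
    refine ext_inner_right ℝ fun w => ?_
    rw [inner_gradient_eq_fderiv, hcomp.fderiv, ContinuousLinearMap.comp_apply,
      ← inner_gradient_eq_fderiv]
    simp only [sub_apply, smul_apply, inner_sub_left,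
      inner_sub_right, inner_smul_left, inner_smul_right, inner_tangProj_left,
      inner_hessian_symm hρx]
    simp
  refine ⟨hcomp.differentiableAt, hgrad, fun nh _ => ?_⟩
  refine ext_inner_right ℝ fun w => ?_
  rw [ContinuousLinearMap.adjoint_inner_left, hgrad, inner_tangProj_left]
  simp only [ContinuousLinearMap.comp_apply]
  generalize tangProj nh w = y
  -- `P H = H`, since the range of `H` is orthogonal to `∇ρ`.
  have hPH : tangProj (gradient ρ x) (fderiv ℝ (gradient ρ) x y) =
      fderiv ℝ (gradient ρ) x y := by
    rw [tangProj_apply, inner_gradient_hessian hρx heik', zero_smul, sub_zero]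
  rw [inner_tangProj_left, tangProj_tangProj (heik x hx)]
  simp only [sub_apply, smul_apply, map_sub, map_smul,
    ContinuousLinearMap.id_apply, hPH, inner_sub_left, inner_sub_right, inner_smul_left,
    inner_smul_right, inner_tangProj_left, inner_hessian_symm hρx]
  simp
end

section
/- Let n and n_h be unit vectors in ℝ^d and let P = I − n ⊗ n and P_h = I − n_h ⊗ n_h be the associated orthogonal projections onto their orthogonal complements. Then the operator norm of the square of their difference satisfies ‖(P − P_h)²‖ ≤ ‖n − n_h‖². -/
/-!
The map `P - P_h = n_h ⊗ n_h - n ⊗ n` has norm at most `sin θ`, where `θ` is the angle between `n`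
and `n_h` (`norm_sq_rank_one_diff_le`), and `sin θ ≤ ‖n - n_h‖` since
`1 - cos² θ ≤ 2 - 2 cos θ` (`norm_tangProj_sub_le`). Submultiplicativity of the operator norm
then bounds the norm of the square.
-/

open scoped RealInnerProductSpace

/-- For unit vectors, `‖⟨m, v⟩ m - ⟨n, v⟩ n‖² ≤ (1 - ⟨n, m⟩²) ‖v‖²`: the difference of the
two rank-one projections has norm at most the sine of the angle between `n` and `m`. Writing `c = ⟨n, m⟩`,
the left side equals `⟨m - c n, v⟩² + (1 - c²) ⟨n, v⟩²`, and Cauchy–Schwarz is applied to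
`⟨m - c n, v⟩ = ⟨m - c n, v - ⟨n, v⟩ n⟩`. -/
theorem norm_sq_rank_one_diff_le {E : Type*} [NormedAddCommGroup E] [InnerProductSpace ℝ E]
    (n m v : E) (hn : ‖n‖ = 1) (hm : ‖m‖ = 1) :
    ‖inner ℝ m v • m - inner ℝ n v • n‖ ^ 2 ≤ (1 - inner ℝ n m ^ 2) * ‖v‖ ^ 2 := by
  have hnn : inner ℝ n n = (1 : ℝ) := by rw [real_inner_self_eq_norm_sq, hn]; norm_num
  have hmm : inner ℝ m m = (1 : ℝ) := by rw [real_inner_self_eq_norm_sq, hm]; norm_num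
  have key := real_inner_mul_inner_self_le (m - inner ℝ n m • n) (v - inner ℝ n v • n)
  rw [← real_inner_self_eq_norm_sq, ← real_inner_self_eq_norm_sq]
  simp only [inner_sub_left, inner_sub_right, real_inner_smul_left, real_inner_smul_right,
    hnn, hmm, real_inner_comm n m, real_inner_comm n v] at key ⊢
  nlinarith [key]

theorem norm_tangProj_sub_le {d : ℕ} (n nh : EuclideanSpace ℝ (Fin d))
    (hn : ‖n‖ = 1) (hnh : ‖nh‖ = 1) :
    ‖tangProj n - tangProj nh‖ ≤ ‖n - nh‖ := by
  refine ContinuousLinearMap.opNorm_le_bound _ (norm_nonneg _) fun v => ?_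
  have hv : (tangProj n - tangProj nh) v = inner ℝ nh v • nh - inner ℝ n v • n := by
    simp [tangProj, outerProd]
  have hd : ‖n - nh‖ ^ 2 = 2 - 2 * inner ℝ n nh := by
    rw [norm_sub_sq_real, hn, hnh]; ring
  -- With `c = ⟨n, nh⟩`, `1 - c² ≤ 2 - 2c` because `(1 - c)² ≥ 0`.
  have hc : 1 - inner ℝ n nh ^ 2 ≤ ‖n - nh‖ ^ 2 := by
    rw [hd]; nlinarith [sq_nonneg (1 - inner ℝ n nh)]
  rw [hv]
  refine (sq_le_sq₀ (norm_nonneg _) (by positivity)).mp ?_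
  rw [mul_pow]
  exact (norm_sq_rank_one_diff_le n nh v hn hnh).trans (by gcongr)

/-- For unit vectors `n`, `n_h` with associated projections `P = I - n ⊗ n`,
`P_h = I - n_h ⊗ n_h`, the square of their difference satisfies
`‖(P - P_h)²‖ ≤ ‖n - n_h‖²`. -/
theorem proj_diff_sq_bound {d : ℕ} (n nh : EuclideanSpace ℝ (Fin d))
    (hn : ‖n‖ = 1) (hnh : ‖nh‖ = 1) :
    ‖(tangProj n - tangProj nh) ∘L (tangProj n - tangProj nh)‖ ≤ ‖n - nh‖ ^ 2 := by
  refine (ContinuousLinearMap.opNorm_comp_le _ _).trans ?_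
  rw [← sq]
  gcongr
  exact norm_tangProj_sub_le n nh hn hnh
end

section
/- Let n and n_h be unit vectors in ℝ^d and let P = I − n ⊗ n and P_h = I − n_h ⊗ n_h be the associated orthogonal projections onto their orthogonal complements. Then the operator norm satisfies ‖P − P P_h P‖ ≤ ‖n − n_h‖². -/
/-! With `w = P n_h = n_h - ⟨n, n_h⟩ n`, idempotence and symmetry of `P` give
`P - P P_h P = w ⊗ w`, whose norm is `‖w‖² = 1 - c²` for `c = ⟨n, n_h⟩`. The bound follows from
`‖n - n_h‖² = 2 - 2c` and `1 - c² ≤ 2 - 2c`, i.e. `0 ≤ (1 - c)²`. -/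

open scoped RealInnerProductSpace

/-- The identity `P - P P_h P = w ⊗ w` with `w = P n_h`, evaluated at `v`. -/
theorem tangProj_sub_sandwich_apply {d : ℕ} (n nh v : EuclideanSpace ℝ (Fin d)) (hn : ‖n‖ = 1) :
    (tangProj n - tangProj n ∘L tangProj nh ∘L tangProj n) v
      = ⟪nh - ⟪n, nh⟫ • n, v⟫ • (nh - ⟪n, nh⟫ • n) := by
  have h1 : ⟪n, n⟫ = 1 := by rw [real_inner_self_eq_norm_sq, hn]; norm_num
  simp only [tangProj, outerProd, sub_apply, ContinuousLinearMap.comp_apply,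
    ContinuousLinearMap.id_apply, ContinuousLinearMap.smulRight_apply, innerSL_apply_apply,
    inner_sub_left, inner_sub_right, inner_smul_left, inner_smul_right, h1, conj_trivial,
    real_inner_comm n nh]
  module

theorem norm_sq_tangential_le {d : ℕ} (n nh : EuclideanSpace ℝ (Fin d))
    (hn : ‖n‖ = 1) (hnh : ‖nh‖ = 1) :
    ‖nh - ⟪n, nh⟫ • n‖ ^ 2 ≤ ‖n - nh‖ ^ 2 := by
  rw [norm_sub_sq_real, norm_sub_sq_real, norm_smul, inner_smul_right, mul_pow, hn, hnh,
    Real.norm_eq_abs, sq_abs, real_inner_comm n nh]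
  nlinarith [sq_nonneg (1 - ⟪n, nh⟫)]

/-- For unit vectors `n`, `n_h` with associated projections `P = I - n ⊗ n`,
`P_h = I - n_h ⊗ n_h`, one has `‖P - P P_h P‖ ≤ ‖n - n_h‖²`. -/
theorem proj_sandwich_bound {d : ℕ} (n nh : EuclideanSpace ℝ (Fin d))
    (hn : ‖n‖ = 1) (hnh : ‖nh‖ = 1) :
    ‖tangProj n - tangProj n ∘L tangProj nh ∘L tangProj n‖ ≤ ‖n - nh‖ ^ 2 := by
  refine ContinuousLinearMap.opNorm_le_bound _ (sq_nonneg _) fun v => ?_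
  rw [tangProj_sub_sandwich_apply n nh v hn, norm_smul]
  have h := norm_sq_tangential_le n nh hn hnh
  set w := nh - ⟪n, nh⟫ • n
  calc ‖⟪w, v⟫‖ * ‖w‖ ≤ (‖w‖ * ‖v‖) * ‖w‖ := by
        gcongr
        exact norm_inner_le_norm w v
    _ = ‖w‖ ^ 2 * ‖v‖ := by ring
    _ ≤ ‖n - nh‖ ^ 2 * ‖v‖ := by gcongr
end
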